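/- There is a universal constant C > 0 such that the following holds. Let ε ∈ (0,1/2], let n ≥ 16, let μ be a product probability measure on {0,1}^n with Pr_{x∼μ}[x_i = 1] ≤ 1/2 for every i, let f : {0,1}^n → {0,1}, and let A := { i ∈ [n] : Pr_{x∼μ}[x_i = 1] > 1/log n }. For y ∈ {0,1}^A let f_y : {0,1}^{[n]∖A} → {0,1} be defined by f_y(z) := f(y,z), where {0,1}^{[n]∖A} carries the restriction of μ to the coordinates [n]∖A. Then there exist a value b_0 ∈ {0,1} and a set S ⊆ [n]∖A with |S| ≤ C·log(1/ε)·n/(ε·log n) such that Pr_{y∼μ|_A}[ I_S^{b_0}(f_y) ≥ 1 − ε/2 ] ≥ 1/4. -/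

import Mathlib

open MeasureTheory

/-- Influence of coalition `S` towards value `b`, over an arbitrary finite index set. -/
noncomputable def infl {ι : Type*} {α : Type*} (μ : Measure (ι → Bool))
    (f : (ι → Bool) → α) (S : Finset ι) (b : α) : ℝ :=
  (μ {x | ∃ y, (∀ j ∉ S, y j = x j) ∧ f y = b}).toReal

namespace Coal

open Finset

section core
variable {Ω : Type*} [Fintype Ω] [DecidableEq Ω] [SemilatticeSup Ω] [OrderBot Ω]

noncomputable def conv (w v : Ω → ℝ) (z : Ω) : ℝ :=
  ∑ t, ∑ s, if t ⊔ s = z then w t * v s else 0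

noncomputable def W (w : Ω → ℝ) : ℕ → Ω → ℝ
  | 0 => fun z => if z = ⊥ then 1 else 0
  | k + 1 => conv w (W w k)

lemma sum_conv (w v u : Ω → ℝ) :
    ∑ z, conv w v z * u z = ∑ t, w t * ∑ s, v s * u (t ⊔ s) := by
  simp only [conv, Finset.sum_mul, Finset.mul_sum]
  rw [Finset.sum_comm]
  refine Finset.sum_congr rfl fun t _ => ?_
  rw [Finset.sum_comm]
  refine Finset.sum_congr rfl fun s _ => ?_
  simp [ite_mul, mul_assoc]

lemma sum_W_zero (w u : Ω → ℝ) : ∑ z, W w 0 z * u z = u ⊥ := by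
  simp [W]

lemma sum_W_succ (w u : Ω → ℝ) (k : ℕ) :
    ∑ z, W w (k+1) z * u z = ∑ t, w t * ∑ s, W w k s * u (t ⊔ s) := by
  rw [W, sum_conv]

lemma W_nonneg {w : Ω → ℝ} (hw : ∀ x, 0 ≤ w x) (k : ℕ) (z : Ω) : 0 ≤ W w k z := by
  induction k generalizing z with
  | zero => simp only [W]; split_ifs <;> norm_num
  | succ k ih =>
    simp only [W, conv]
    refine Finset.sum_nonneg fun t _ => Finset.sum_nonneg fun s _ => ?_
    split_ifs
    · exact mul_nonneg (hw t) (ih s)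
    · exact le_rfl

lemma W_sum {w : Ω → ℝ} (h1 : ∑ x, w x = 1) (k : ℕ) : ∑ z, W w k z = 1 := by
  induction k with
  | zero => simp [W]
  | succ k ih =>
    have := sum_W_succ w (fun _ => 1) k
    simp only [mul_one, ih, h1] at this
    exact this

lemma key {w : Ω → ℝ} (hw : ∀ x, 0 ≤ w x) (h1 : ∑ x, w x = 1) (β : Ω → ℝ)
    (hβ0 : ∀ x, 0 ≤ β x) (hβ1 : ∀ x, β x ≤ 1) (k : ℕ) :
    ∀ u : Ω → ℝ, (∀ x, 0 ≤ u x) → (∀ x, u x ≤ 1) →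
    ∑ z, W w (k+1) z * u z ≤ (1 - ∑ x, w x * β x) ^ (k+1)
      + (k+1) * ∑ x, w x * (β x * ∑ s, W w k s * u (x ⊔ s)) := by
  have hδ : 1 - ∑ x, w x * β x = ∑ x, w x * (1 - β x) := by
    simp only [mul_sub, mul_one, Finset.sum_sub_distrib, h1]
  induction k with
  | zero =>
    intro u hu0 hu1
    rw [sum_W_succ, hδ]
    simp only [sum_W_zero]
    norm_num
    rw [← Finset.sum_add_distrib]
    refine Finset.sum_le_sum fun t _ => ?_
    have := mul_nonneg (hw t) (mul_nonneg (sub_nonneg.2 (hβ1 t)) (sub_nonneg.2 (hu1 t)))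
    nlinarith
  | succ k ih =>
    intro u hu0 hu1
    rw [sum_W_succ]
    set d := 1 - ∑ x, w x * β x with hd
    have e1 : ∀ t, w t * ∑ s, W w (k+1) s * u (t ⊔ s) ≤
        w t * (1 - β t) * d^(k+1)
        + (k+1) * (w t * ∑ x, w x * (β x * ∑ s, W w k s * u (t ⊔ (x ⊔ s))))
        + w t * (β t * ∑ s, W w (k+1) s * u (t ⊔ s)) := by
      intro t
      have h := ih (fun z => u (t ⊔ z)) (fun _ => hu0 _) (fun _ => hu1 _)
      set X := ∑ s, W w (k+1) s * u (t ⊔ s)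
      set Q := ∑ x, w x * (β x * ∑ s, W w k s * u (t ⊔ (x ⊔ s)))
      have hQ : 0 ≤ Q := Finset.sum_nonneg fun x _ => mul_nonneg (hw x) (mul_nonneg (hβ0 x)
        (Finset.sum_nonneg fun s _ => mul_nonneg (W_nonneg hw k s) (hu0 _)))
      have h2 : (1 - β t) * X ≤ (1 - β t) * d^(k+1) + (k+1) * Q := by
        have a := mul_le_mul_of_nonneg_left h (sub_nonneg.2 (hβ1 t))
        have b : 0 ≤ β t * ((k+1) * Q) := mul_nonneg (hβ0 t) (by positivity)
        nlinarith
      have h3 := mul_le_mul_of_nonneg_left h2 (hw t)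
      nlinarith
    refine (Finset.sum_le_sum fun t _ => e1 t).trans (le_of_eq ?_)
    rw [Finset.sum_add_distrib, Finset.sum_add_distrib, ← Finset.sum_mul, ← hδ, ← Finset.mul_sum]
    have e2 : ∑ t, w t * ∑ x, w x * (β x * ∑ s, W w k s * u (t ⊔ (x ⊔ s)))
        = ∑ x, w x * (β x * ∑ s, W w (k+1) s * u (x ⊔ s)) := by
      simp only [sum_W_succ]
      simp only [Finset.mul_sum]
      rw [Finset.sum_comm]
      refine Finset.sum_congr rfl fun x _ => Finset.sum_congr rfl fun t _ =>
        Finset.sum_congr rfl fun s _ => ?_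
      rw [sup_left_comm]; ring
    rw [e2]; push_cast; ring

/-- Most `x` have a noticeable chance. -/
lemma small_bad {w : Ω → ℝ} (hw : ∀ x, 0 ≤ w x) (h1 : ∑ x, w x = 1) (k : ℕ)
    (u : Ω → ℝ) (hu0 : ∀ x, 0 ≤ u x) (hu1 : ∀ x, u x ≤ 1) (δ : ℝ) (hδ : 0 < δ)
    (hk : 20 ≤ (k+1) * δ) (hk' : (k+1) * δ ≤ 21)
    (hu : 1/10 ≤ ∑ z, W w (k+1) z * u z) :
    ∑ x, w x * (if ∑ s, W w k s * u (x ⊔ s) < 1/1000 then 1 else 0) ≤ δ := by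
  by_contra hcon
  push Not at hcon
  set D := ∑ x, w x * (if ∑ s, W w k s * u (x ⊔ s) < 1/1000 then (1:ℝ) else 0) with hD
  have hDpos : 0 < D := hδ.trans hcon
  have hs1 : δ / D ≤ 1 := (div_le_one hDpos).2 hcon.le
  have hs0 : 0 ≤ δ / D := by positivity
  have h := key hw h1 (fun x => δ / D * (if ∑ s, W w k s * u (x ⊔ s) < 1/1000 then (1:ℝ) else 0))
    (fun x => by split_ifs <;> simp [hs0]) (fun x => by split_ifs <;> simp [hs1]) k u hu0 hu1
  have e1 : ∑ x, w x * (δ / D * (if ∑ s, W w k s * u (x ⊔ s) < 1/1000 then (1:ℝ) else 0)) = δ := by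
    simp only [mul_left_comm _ (δ / D)]
    rw [← Finset.mul_sum, ← hD]; field_simp
  have e2 : ∑ x, w x * (δ / D * (if ∑ s, W w k s * u (x ⊔ s) < 1/1000 then (1:ℝ) else 0)
      * ∑ s, W w k s * u (x ⊔ s)) ≤ δ * (1/1000) := by
    refine le_trans ?_ (le_of_eq (congrArg (· * (1/1000 : ℝ)) e1))
    simp only [Finset.sum_mul]
    refine Finset.sum_le_sum fun x _ => ?_
    rw [mul_assoc (w x)]
    refine mul_le_mul_of_nonneg_left ?_ (hw x)
    split_ifs with hh
    · exact mul_le_mul_of_nonneg_left hh.le (by simpa using hs0)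
    · simp
  rw [e1] at h
  have hδ1 : δ ≤ 1 := by
    refine hcon.le.trans ?_
    rw [← h1]
    refine Finset.sum_le_sum fun x _ => ?_
    split_ifs <;> simp [hw x]
  have e3 : (1 - δ)^(k+1) ≤ 1/21 := by
    have a : (1 + (k+1) * δ) ≤ (1+δ)^(k+1) := by
      have := one_add_mul_le_pow (a := δ) (by linarith) (k+1)
      push_cast at this; exact this
    have b : (1-δ)^(k+1) * (1+δ)^(k+1) ≤ 1 := by
      rw [← mul_pow]
      exact pow_le_one₀ (by nlinarith) (by nlinarith)
    have c : 0 ≤ (1-δ)^(k+1) := pow_nonneg (by linarith) _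
    nlinarith
  have e4 : ((k:ℝ)+1) * (δ * (1/1000)) ≤ 21/1000 := by nlinarith
  have e5 := mul_le_mul_of_nonneg_left e2 (by positivity : (0:ℝ) ≤ (k:ℝ)+1)
  linarith

lemma blocks {v : Ω → ℝ} (hv : ∀ x, 0 ≤ v x) (h1 : ∑ x, v x = 1) (P : Ω → Prop)
    [DecidablePred P] [∀ S : Ω, Decidable (∃ s ≤ S, P s)] (c : ℝ)
    (hc1 : c ≤ 1)
    (hc : c ≤ ∑ s, v s * (if P s then 1 else 0)) (m : ℕ) :
    ∑ S, W v m S * (if ∃ s ≤ S, P s then 0 else 1) ≤ (1 - c) ^ m := by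
  induction m with
  | zero => rw [sum_W_zero]; split_ifs <;> norm_num
  | succ m ih =>
    rw [sum_W_succ]
    have e : ∀ t, v t * ∑ s, W v m s * (if ∃ r ≤ t ⊔ s, P r then (0:ℝ) else 1) ≤
        (v t * (1 - if P t then 1 else 0)) * (1-c)^m := by
      intro t
      rw [mul_assoc]
      refine mul_le_mul_of_nonneg_left ?_ (hv t)
      by_cases ht : P t
      · have : ∀ s, ∃ r ≤ t ⊔ s, P r := fun s => ⟨t, le_sup_left, ht⟩
        simp [ht, this]
      · simp only [ht, if_false, sub_zero, one_mul]
        refine le_trans (Finset.sum_le_sum fun s _ => ?_) ih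
        refine mul_le_mul_of_nonneg_left ?_ (W_nonneg hv m s)
        by_cases hs : ∃ r ≤ s, P r
        · obtain ⟨r, hr, hr'⟩ := hs
          have h2 : ∃ r ≤ t ⊔ s, P r := ⟨r, hr.trans le_sup_right, hr'⟩
          have h3 : ∃ r ≤ s, P r := ⟨r, hr, hr'⟩
          rw [if_pos h2, if_pos h3]
        · rw [if_neg hs]; split_ifs <;> norm_num
    refine (Finset.sum_le_sum fun t _ => e t).trans ?_
    rw [← Finset.sum_mul, pow_succ']
    refine mul_le_mul_of_nonneg_right ?_ (pow_nonneg (by linarith) _)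
    simp only [mul_sub, mul_one, Finset.sum_sub_distrib, h1]
    linarith

lemma size {w : Ω → ℝ} (hw : ∀ x, 0 ≤ w x) (h1 : ∑ x, w x = 1) (N : Ω → ℝ)
    (hN0 : N ⊥ = 0) (hN : ∀ s t, N (s ⊔ t) ≤ N s + N t) (M : ℝ) (hM : ∑ x, w x * N x ≤ M)
    (k : ℕ) : ∑ z, W w k z * N z ≤ k * M := by
  induction k with
  | zero => rw [sum_W_zero]; simp [hN0]
  | succ k ih =>
    rw [sum_W_succ]
    have : ∀ t, w t * ∑ s, W w k s * N (t ⊔ s) ≤ w t * N t + w t * (k * M) := by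
      intro t
      rw [← mul_add]
      refine mul_le_mul_of_nonneg_left ?_ (hw t)
      have : ∑ s, W w k s * N (t ⊔ s) ≤ ∑ s, (W w k s * N t + W w k s * N s) :=
        Finset.sum_le_sum fun s _ => by
          rw [← mul_add]; exact mul_le_mul_of_nonneg_left (hN t s) (W_nonneg hw k s)
      rw [Finset.sum_add_distrib, ← Finset.sum_mul, W_sum h1] at this
      linarith
    refine (Finset.sum_le_sum fun t _ => this t).trans ?_
    rw [Finset.sum_add_distrib, ← Finset.sum_mul, h1]
    push_cast; linarith

lemma exists_le_avg {w : Ω → ℝ} (hw : ∀ x, 0 ≤ w x) (h1 : ∑ x, w x = 1) (φ : Ω → ℝ) (a : ℝ)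
    (h : ∑ x, w x * φ x ≤ a) : ∃ x, φ x ≤ a := by
  by_contra hc
  push Not at hc
  have h0 : ∑ x, w x * (φ x - a) ≤ 0 := by
    simp only [mul_sub, Finset.sum_sub_distrib, ← Finset.sum_mul, h1]; linarith
  have h2 : ∀ x ∈ Finset.univ, 0 ≤ w x * (φ x - a) :=
    fun x _ => mul_nonneg (hw x) (sub_nonneg.2 (hc x).le)
  have h3 := (Finset.sum_eq_zero_iff_of_nonneg h2).1 (le_antisymm h0 (Finset.sum_nonneg h2))
  have h4 : ∀ x, w x = 0 := fun x => by
    rcases mul_eq_zero.1 (h3 x (Finset.mem_univ x)) with h | h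
    · exact h
    · linarith [hc x]
  simp [h4] at h1

open Classical in
lemma main {Y : Type*} [Fintype Y] {ρ : Y → ℝ} (hρ : ∀ y, 0 ≤ ρ y) (hρ1 : ∑ y, ρ y = 1)
    {w : Ω → ℝ} (hw : ∀ x, 0 ≤ w x) (h1 : ∑ x, w x = 1) (F : Y → Ω → Bool)
    (N : Ω → ℝ) (hN0 : N ⊥ = 0) (hNn : ∀ s, 0 ≤ N s)
    (hN : ∀ s t, N (s ⊔ t) ≤ N s + N t) (M : ℝ)
    (hM0 : 0 < M) (hM : ∑ x, w x * N x ≤ M) (ε : ℝ) (hε : 0 < ε)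
    (q m : ℕ) (hq : 20 ≤ (q+1) * (ε/40)) (hq' : (q+1) * (ε/40) ≤ 21)
    (hqm : 0 < m * (q * M))
    (hm : (1 - 1/1000 : ℝ)^m ≤ ε/40) :
    ∃ (b : Bool) (S : Ω), N S ≤ 3 * (m * (q * M)) ∧
      1/4 ≤ ∑ y, ρ y *
        (if 1 - ε/2 ≤ ∑ x, w x * (if ∃ s ≤ S, F y (x ⊔ s) = b then 1 else 0) then 1 else 0) := by
  -- choose b
  set T : Bool → Y → ℝ := fun b y => ∑ z, W w (q+1) z * (if F y z = b then 1 else 0) with hT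
  have hT1 : ∀ b y, T b y ≤ 1 := fun b y => by
    rw [← W_sum h1 (q+1)]
    refine Finset.sum_le_sum fun z _ => ?_
    have := W_nonneg hw (q+1) z
    split_ifs <;> simp [this]
  have hTT : ∀ y, T true y + T false y = 1 := fun y => by
    rw [← W_sum h1 (q+1), hT]
    simp only
    rw [← Finset.sum_add_distrib]
    refine Finset.sum_congr rfl fun z _ => ?_
    cases F y z <;> simp
  have hb : ∃ b, 1/2 ≤ ∑ y, ρ y * T b y := by
    have : ∑ y, ρ y * T true y + ∑ y, ρ y * T false y = 1 := by
      rw [← Finset.sum_add_distrib]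
      simp only [← mul_add, hTT, mul_one, hρ1]
    by_cases h : 1/2 ≤ ∑ y, ρ y * T true y
    · exact ⟨_, h⟩
    · exact ⟨false, by linarith⟩
  obtain ⟨b, hb⟩ := hb
  -- good y
  have hG : 4/9 ≤ ∑ y, ρ y * (if 1/10 ≤ T b y then 1 else 0) := by
    have : ∑ y, ρ y * T b y ≤ ∑ y, (ρ y * (1/10) + (9/10) * (ρ y * (if 1/10 ≤ T b y then 1 else 0))) := by
      refine Finset.sum_le_sum fun y _ => ?_
      have a := hρ y
      have b' := hT1 b y
      split_ifs with h
      · nlinarith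
      · push Not at h; nlinarith
    rw [Finset.sum_add_distrib, ← Finset.sum_mul, hρ1, ← Finset.mul_sum] at this
    linarith
  -- the random coalition
  set V := W w q with hV
  have hV0 : ∀ x, 0 ≤ V x := W_nonneg hw q
  have hV1 : ∑ x, V x = 1 := W_sum h1 q
  set fail : Y → Ω → ℝ := fun y S => ∑ x, w x * (if ∃ s ≤ S, F y (x ⊔ s) = b then 0 else 1) with hfail
  have hfail0 : ∀ y S, 0 ≤ fail y S := fun y S =>
    Finset.sum_nonneg fun x _ => mul_nonneg (hw x) (by split_ifs <;> norm_num)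
  have hgood : ∀ y, 1/10 ≤ T b y → ∑ S, W V m S * fail y S ≤ ε/20 := by
    intro y hy
    have hsm := small_bad hw h1 q (fun z => if F y z = b then 1 else 0)
      (fun x => by split_ifs <;> norm_num) (fun x => by split_ifs <;> norm_num) (ε/40)
      (by positivity) hq hq' hy
    have e : ∑ S, W V m S * fail y S = ∑ x, w x * ∑ S, W V m S * (if ∃ s ≤ S, F y (x ⊔ s) = b then 0 else 1) := by
      simp only [hfail, Finset.mul_sum]
      rw [Finset.sum_comm]
      refine Finset.sum_congr rfl fun x _ => Finset.sum_congr rfl fun s _ => ?_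
      ring
    rw [e]
    have e2 : ∀ x, w x * ∑ S, W V m S * (if ∃ s ≤ S, F y (x ⊔ s) = b then (0:ℝ) else 1) ≤
        w x * (if ∑ s, W w q s * (if F y (x ⊔ s) = b then 1 else 0) < (1/1000:ℝ) then 1 else 0)
          + w x * (ε/40) := by
      intro x
      rw [← mul_add]
      refine mul_le_mul_of_nonneg_left ?_ (hw x)
      split_ifs with hx
      · have : ∑ S, W V m S * (if ∃ s ≤ S, F y (x ⊔ s) = b then (0:ℝ) else 1) ≤ 1 := by
          refine le_trans (Finset.sum_le_sum fun z _ => ?_) (W_sum hV1 m).le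
          have := W_nonneg hV0 m z
          split_ifs
          · rw [mul_zero]; exact this
          · rw [mul_one]
        linarith
      · push Not at hx
        have := blocks hV0 hV1 (fun s => F y (x ⊔ s) = b) (1/1000) (by norm_num) hx m
        linarith
    refine (Finset.sum_le_sum fun x _ => e2 x).trans ?_
    rw [Finset.sum_add_distrib, ← Finset.sum_mul, h1]
    linarith
  have hsize : ∑ S, W V m S * N S ≤ m * (q * M) :=
    size hV0 hV1 N hN0 hN _ (size hw h1 N hN0 hN M hM q) m
  set K : ℝ := m * (q * M) with hK
  set R : Ω → ℝ := fun S => ∑ y, ρ y * ((if 1/10 ≤ T b y then 1 else 0) * fail y S) with hR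
  have hR0 : ∀ S, 0 ≤ R S := fun S => Finset.sum_nonneg fun y _ => mul_nonneg (hρ y)
    (mul_nonneg (by split_ifs <;> norm_num) (hfail0 y S))
  have hRavg : ∑ S, W V m S * R S ≤ ε/20 := by
    have e : ∑ S, W V m S * R S = ∑ y, ρ y * ((if 1/10 ≤ T b y then 1 else 0) * ∑ S, W V m S * fail y S) := by
      simp only [hR, Finset.mul_sum]
      rw [Finset.sum_comm]
      refine Finset.sum_congr rfl fun x _ => Finset.sum_congr rfl fun s _ => ?_
      ring
    rw [e]
    calc _ ≤ ∑ y, ρ y * (ε/20) := by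
          refine Finset.sum_le_sum fun y _ => mul_le_mul_of_nonneg_left ?_ (hρ y)
          split_ifs with h
          · simpa using hgood y h
          · simp; positivity
      _ = ε/20 := by rw [← Finset.sum_mul, hρ1, one_mul]
  obtain ⟨S, hS⟩ := exists_le_avg (W_nonneg hV0 m) (W_sum hV1 m)
    (fun S => (1/(20*K)) * N S + (2/ε) * R S) (3/20) (by
      have e : ∑ S, W V m S * ((1/(20*K)) * N S + (2/ε) * R S)
          = (1/(20*K)) * ∑ S, W V m S * N S + (2/ε) * ∑ S, W V m S * R S := by
        rw [Finset.mul_sum, Finset.mul_sum, ← Finset.sum_add_distrib]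
        exact Finset.sum_congr rfl fun x _ => by ring
      rw [e]
      have a : (1/(20*K)) * ∑ S, W V m S * N S ≤ (1/(20*K)) * K :=
        mul_le_mul_of_nonneg_left hsize (by positivity)
      have a' : (1/(20*K)) * K = 1/20 := by field_simp
      have c : (2/ε) * ∑ S, W V m S * R S ≤ (2/ε) * (ε/20) :=
        mul_le_mul_of_nonneg_left hRavg (by positivity)
      have c' : (2/ε) * (ε/20) = 1/10 := by field_simp; norm_num
      linarith)
  have hp1 : 0 ≤ (1/(20*K)) * N S := mul_nonneg (by positivity) (hNn S)
  have hp2 : 0 ≤ (2/ε) * R S := mul_nonneg (by positivity) (hR0 S)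
  refine ⟨b, S, ?_, ?_⟩
  · have : (1/(20*K)) * N S ≤ 3/20 := by linarith
    rw [one_div, inv_mul_le_iff₀ (by positivity)] at this
    linarith
  · have hRS : (2/ε) * R S ≤ 3/20 := by linarith
    have hc : ∀ y, ρ y * (if 1/10 ≤ T b y then (1:ℝ) else 0) ≤
        ρ y * (if 1 - ε/2 ≤ ∑ x, w x * (if ∃ s ≤ S, F y (x ⊔ s) = b then 1 else 0) then 1 else 0)
        + (2/ε) * (ρ y * ((if 1/10 ≤ T b y then 1 else 0) * fail y S)) := by
      intro y
      rw [mul_left_comm (2/ε), ← mul_add]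
      refine mul_le_mul_of_nonneg_left ?_ (hρ y)
      have hf : fail y S = 1 - ∑ x, w x * (if ∃ s ≤ S, F y (x ⊔ s) = b then 1 else 0) := by
        rw [eq_sub_iff_add_eq, hfail]
        simp only
        rw [← Finset.sum_add_distrib]
        refine Eq.trans ?_ h1
        refine Finset.sum_congr rfl fun x _ => ?_
        split_ifs <;> simp
      have hf0 := hfail0 y S
      by_cases hy : 1 - ε/2 ≤ ∑ x, w x * (if ∃ s ≤ S, F y (x ⊔ s) = b then (1:ℝ) else 0)
      · rw [if_pos hy]
        have : 0 ≤ (2/ε) * ((if 1/10 ≤ T b y then 1 else 0) * fail y S) :=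
          mul_nonneg (by positivity) (mul_nonneg (by split_ifs <;> norm_num) hf0)
        have h3 : (if 1/10 ≤ T b y then (1:ℝ) else 0) ≤ 1 := by split_ifs <;> norm_num
        linarith
      · rw [if_neg hy]
        push Not at hy
        have : 1 ≤ (2/ε) * fail y S := by
          rw [div_mul_eq_mul_div, le_div_iff₀ hε]; linarith
        split_ifs
        · linarith
        · simp
    have := Finset.sum_le_sum fun y (_ : y ∈ Finset.univ) => hc y
    rw [Finset.sum_add_distrib, ← Finset.mul_sum] at this
    linarith

end core

open Classical in
lemma real_eq_sum {α : Type*} [Fintype α] [MeasurableSpace α] [MeasurableSingletonClass α]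
    (μ : Measure α) [IsFiniteMeasure μ] (s : Set α) :
    (μ s).toReal = ∑ x, μ.real {x} * (if x ∈ s then 1 else 0) := by
  have : s = ((Finset.univ.filter (· ∈ s) : Finset α) : Set α) := by ext; simp
  change μ.real s = _
  conv_lhs => rw [this]
  rw [← sum_measureReal_singleton, Finset.sum_filter]
  simp

lemma params (ε : ℝ) (hε : 0 < ε) (hε2 : ε ≤ 1/2) : ∃ q m : ℕ, 0 < q ∧ 0 < m ∧
    20 ≤ ((q:ℝ)+1) * (ε/40) ∧ ((q:ℝ)+1) * (ε/40) ≤ 21 ∧ (1 - 1/1000 : ℝ)^m ≤ ε/40 ∧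
    (q:ℝ) ≤ 800/ε ∧ (m:ℝ) ≤ 40001 * Real.logb 2 (1/ε) := by
  have hL : 1 ≤ Real.logb 2 (1/ε) := by
    rw [Real.le_logb_iff_rpow_le (by norm_num) (by positivity)]
    rw [Real.rpow_one, le_div_iff₀ hε]; linarith
  have h8 : 1600 ≤ 800/ε := by rw [le_div_iff₀ hε]; linarith
  have hqb := Nat.lt_floor_add_one (800/ε)
  have hqa := Nat.floor_le (by positivity : 0 ≤ 800/ε)
  have hmul : 800/ε * (ε/40) = 20 := by field_simp; norm_num
  have hq0 : 0 < ⌊800/ε⌋₊ := Nat.floor_pos.2 (by linarith)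
  have hlog : Real.log (40/ε) ≤ 40 * Real.logb 2 (1/ε) := by
    rw [show 40/ε = 40 * (1/ε) by ring, Real.log_mul (by norm_num) (by positivity)]
    have h40 : Real.log 40 ≤ 39 := by
      have := Real.log_le_sub_one_of_pos (by norm_num : (0:ℝ) < 40); linarith
    have : Real.log (1/ε) ≤ Real.logb 2 (1/ε) := by
      have h2 : Real.log (1/ε) = Real.logb 2 (1/ε) * Real.log 2 := by
        rw [Real.logb]; have := Real.log_pos (by norm_num : (1:ℝ) < 2); field_simp
      have : Real.log 2 ≤ 1 := by
        have := Real.log_le_sub_one_of_pos (by norm_num : (0:ℝ) < 2); linarith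
      rw [h2]; nlinarith
    linarith
  have hlogpos : 0 < Real.log (40/ε) := Real.log_pos (by rw [lt_div_iff₀ hε]; linarith)
  refine ⟨⌊800/ε⌋₊, ⌈1000 * Real.log (40/ε)⌉₊, hq0, Nat.ceil_pos.2 (by positivity), ?_, ?_, ?_, hqa, ?_⟩
  · nlinarith
  · nlinarith
  · have hm := Nat.le_ceil (1000 * Real.log (40/ε))
    set m := ⌈1000 * Real.log (40/ε)⌉₊
    calc (1 - 1/1000 : ℝ)^m ≤ (Real.exp (-(1/1000)))^m :=
          pow_le_pow_left₀ (by norm_num) (by linarith [Real.add_one_le_exp (-(1/1000:ℝ))]) _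
      _ = Real.exp (m * (-(1/1000))) := (Real.exp_nat_mul _ _).symm
      _ ≤ Real.exp (- Real.log (40/ε)) := Real.exp_le_exp.2 (by linarith)
      _ = ε/40 := by rw [Real.exp_neg, Real.exp_log (by positivity), inv_div]
  · have := Nat.ceil_lt_add_one (by positivity : 0 ≤ 1000 * Real.log (40/ε))
    linarith

lemma exp_card {ι : Type*} [Fintype ι] [DecidableEq ι] (μs : ι → Measure Bool)
    [∀ i, IsProbabilityMeasure (μs i)] :
    ∑ z : ι → Bool, (Measure.pi μs).real {z} * (∑ i, if z i = true then (1:ℝ) else 0)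
      = ∑ i, (μs i {true}).toReal := by
  simp only [Finset.mul_sum]
  rw [Finset.sum_comm]
  refine Finset.sum_congr rfl fun i _ => ?_
  have h := (measurePreserving_eval μs i).measure_preimage
    (MeasurableSet.singleton true).nullMeasurableSet
  rw [← h, real_eq_sum]
  refine Finset.sum_congr rfl fun z _ => ?_
  simp

end Coal

/-- with `A` the set of coordinates of bias `> 1/log n`, there are `b₀` and a
coalition `S ⊆ [n]∖A` of size `O(log(1/ε)·n/(ε·log n))` such that for a `μ|_A`-random `y`,
`I_S^{b₀}(f_y) ≥ 1 − ε/2` with probability at least `1/4`. -/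
theorem biased_part_coalition :
    ∃ C : ℝ, C > 0 ∧
      ∀ ε : ℝ, 0 < ε → ε ≤ 1/2 →
      ∀ n : ℕ, 16 ≤ n →
      ∀ μs : Fin n → Measure Bool, (∀ i, IsProbabilityMeasure (μs i)) →
      (∀ i, (μs i {true}).toReal ≤ 1/2) →
      ∀ f : (Fin n → Bool) → Bool,
      ∀ A : Finset (Fin n),
        A = Finset.univ.filter (fun i => 1 / Real.logb 2 n < (μs i {true}).toReal) →
      ∃ (b₀ : Bool) (S : Finset {j : Fin n // j ∉ A}),
        (S.card : ℝ) ≤ C * Real.logb 2 (1/ε) * n / (ε * Real.logb 2 n) ∧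
        ((Measure.pi fun i : {j : Fin n // j ∈ A} => μs i.val)
            {y | infl (Measure.pi fun i : {j : Fin n // j ∉ A} => μs i.val)
                (fun z => f (fun j => if h : j ∈ A then y ⟨j, h⟩ else z ⟨j, h⟩))
                S b₀ ≥ 1 - ε/2}).toReal ≥ 1/4 := by
  classical
  refine ⟨10^8, by norm_num, ?_⟩
  intro ε hε hε2 n hn μs hμ _ f A hA
  obtain ⟨q, m, hq0, hm0, hq, hq', hm, hqb, hmb⟩ := Coal.params ε hε hε2
  have hn0 : (0:ℝ) < n := by
    have : (16:ℝ) ≤ n := by exact_mod_cast hn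
    linarith
  have hlog : 0 < Real.logb 2 n := Real.logb_pos (by norm_num) (by
    have : (16:ℝ) ≤ n := by exact_mod_cast hn
    linarith)
  set ρ := Measure.pi fun i : {j : Fin n // j ∈ A} => μs i.val with hρ
  set ν := Measure.pi fun i : {j : Fin n // j ∉ A} => μs i.val with hν
  have hMpos : 0 < (n:ℝ) / Real.logb 2 n := by positivity
  have hM : ∑ z : {j : Fin n // j ∉ A} → Bool, ν.real {z} * (∑ i, if z i = true then (1:ℝ) else 0) ≤ n / Real.logb 2 n := by
    rw [hν, Coal.exp_card]
    calc _ ≤ ∑ i : {j : Fin n // j ∉ A}, 1 / Real.logb 2 n := by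
          refine Finset.sum_le_sum fun i _ => ?_
          have := i.2
          have h2 : ¬ (1 / Real.logb 2 n < (μs i.1 {true}).toReal) := fun h =>
            this ((Finset.ext_iff.1 hA i.1).2 (Finset.mem_filter.2 ⟨Finset.mem_univ _, h⟩))
          exact not_lt.1 h2
      _ = (Fintype.card {j : Fin n // j ∉ A} : ℝ) * (1 / Real.logb 2 n) := by
          rw [Finset.sum_const, nsmul_eq_mul, Finset.card_univ]
      _ ≤ n * (1 / Real.logb 2 n) := by
          refine mul_le_mul_of_nonneg_right ?_ (by positivity)
          have := Fintype.card_subtype_le (fun j : Fin n => j ∉ A)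
          rw [Fintype.card_fin] at this
          exact_mod_cast this
      _ = _ := by ring
  have hsum : ∀ {κ : Type} [Fintype κ] [DecidableEq κ] (μ : Measure (κ → Bool)) [IsProbabilityMeasure μ],
      ∑ y, μ.real {y} = 1 := by
    intro κ _ _ μ _
    simp
  obtain ⟨b, S, hS1, hS2⟩ := Coal.main (ρ := fun y => ρ.real {y}) (w := fun z => ν.real {z})
    (fun _ => measureReal_nonneg) (hsum ρ) (fun _ => measureReal_nonneg) (hsum ν)
    (fun y z => f (fun j => if h : j ∈ A then y ⟨j, h⟩ else z ⟨j, h⟩))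
    (fun z => ∑ i, if z i = true then (1:ℝ) else 0)
    (by simp) (fun z => Finset.sum_nonneg fun i _ => by split_ifs <;> norm_num)
    (fun s t => by
      rw [← Finset.sum_add_distrib]
      refine Finset.sum_le_sum fun i _ => ?_
      simp only [Pi.sup_apply]
      rcases Bool.eq_false_or_eq_true (s i) with hs | hs <;>
        rcases Bool.eq_false_or_eq_true (t i) with ht | ht <;> simp [hs, ht])
    (n / Real.logb 2 n) hMpos hM ε hε q m hq hq' (by positivity) hm
  refine ⟨b, Finset.univ.filter (fun i => S i = true), ?_, ?_⟩
  · have hc : ((Finset.univ.filter (fun i => S i = true)).card : ℝ)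
        = ∑ i, if S i = true then (1:ℝ) else 0 := by simp
    rw [hc]
    refine hS1.trans ?_
    have hL : 0 ≤ Real.logb 2 (1/ε) := by
      have : (0:ℝ) ≤ m := Nat.cast_nonneg m
      linarith
    calc 3 * ((m:ℝ) * (q * (n / Real.logb 2 n)))
        ≤ 3 * ((40001 * Real.logb 2 (1/ε)) * (800/ε * (n / Real.logb 2 n))) := by gcongr
      _ = 96002400 * (Real.logb 2 (1/ε) * n / (ε * Real.logb 2 n)) := by ring
      _ ≤ 10^8 * (Real.logb 2 (1/ε) * n / (ε * Real.logb 2 n)) := by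
          refine mul_le_mul_of_nonneg_right (by norm_num) (by positivity)
      _ = _ := by ring
  · rw [ge_iff_le, Coal.real_eq_sum]
    refine hS2.trans (Finset.sum_le_sum fun y _ => mul_le_mul_of_nonneg_left ?_ measureReal_nonneg)
    have himp : ∑ x, ν.real {x} * (if ∃ s ≤ S, f (fun j => if h : j ∈ A then y ⟨j, h⟩
          else (x ⊔ s) ⟨j, h⟩) = b then (1:ℝ) else 0) ≤
        infl ν (fun z => f (fun j => if h : j ∈ A then y ⟨j, h⟩ else z ⟨j, h⟩))
          (Finset.univ.filter (fun i => S i = true)) b := by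
      rw [infl, Coal.real_eq_sum]
      refine Finset.sum_le_sum fun x _ => mul_le_mul_of_nonneg_left ?_ measureReal_nonneg
      by_cases hx : ∃ s ≤ S, f (fun j => if h : j ∈ A then y ⟨j, h⟩ else (x ⊔ s) ⟨j, h⟩) = b
      · rw [if_pos hx, if_pos]
        obtain ⟨s, hs, hfs⟩ := hx
        refine ⟨x ⊔ s, fun j hj => ?_, hfs⟩
        have hSj : S j = false := by simpa using hj
        have hsj := hs j
        rw [hSj] at hsj
        have : s j = false := le_bot_iff.1 hsj
        simp [this]
      · rw [if_neg hx]; split_ifs <;> norm_num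
    by_cases hy : 1 - ε/2 ≤ ∑ x, ν.real {x} * (if ∃ s ≤ S, f (fun j => if h : j ∈ A then y ⟨j, h⟩
          else (x ⊔ s) ⟨j, h⟩) = b then (1:ℝ) else 0)
    · rw [if_pos hy, if_pos]
      exact hy.trans himp
    · rw [if_neg hy]; split_ifs <;> norm_num
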